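/- arXiv:1304.2580 — 5 statements merged into one kernel-verified Lean document; each statement's English description precedes it below -/
import Mathlib

section
/- Let n ≥ 2, let L be an n×n real symmetric positive semidefinite matrix satisfying L·𝟏 = 0 (where 𝟏 is the all-ones vector in ℝⁿ), with eigenvalues listed in increasing order 0 = λ₁ ≤ λ₂ ≤ … ≤ λₙ, and let δ ∈ ℝ. If max{|1 − δλ₂|, |1 − δλₙ|} < 1, then for every initial vector x₀ ∈ ℝⁿ the iterates x(t) = (I − δL)ᵗ x₀ converge (in norm) as t → ∞ to μ𝟏, where μ = (1/n)·𝟏ᵀx₀ is the average of the entries of x₀. -/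
open Matrix Filter

/-- If `L` is a real symmetric positive semidefinite `n × n` matrix with `L 𝟏 = 0`
whose eigenvalues (with multiplicity, in increasing order) are
`0 = λ₁ ≤ λ₂ ≤ … ≤ λₙ`, witnessed by an orthonormal family of eigenvectors `v`,
and `max {|1 - δλ₂|, |1 - δλₙ|} < 1`, then for every initial vector `x₀`, the
iterates `x(t) = (I - δL)^t x₀` converge in (Euclidean) norm to `μ 𝟏`, where
`μ = (𝟏ᵀ x₀) / n` is the average of the entries of `x₀`. -/
theorem consensus_convergence {n : ℕ} (hn : 2 ≤ n)
    (L : Matrix (Fin n) (Fin n) ℝ)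
    (hsym : L.IsSymm) (hpsd : L.PosSemidef)
    (hL1 : L.mulVec (fun _ => (1 : ℝ)) = 0)
    (lam : Fin n → ℝ) (hmono : Monotone lam)
    (hlam1 : lam ⟨0, by omega⟩ = 0)
    (v : Fin n → (Fin n → ℝ))
    (honb : ∀ i j, v i ⬝ᵥ v j = if i = j then (1 : ℝ) else 0)
    (heig : ∀ i, L.mulVec (v i) = lam i • v i)
    (δ : ℝ)
    (hs : max |1 - δ * lam ⟨1, by omega⟩| |1 - δ * lam ⟨n - 1, by omega⟩| < 1)
    (x₀ : Fin n → ℝ) :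
    Tendsto
      (fun t : ℕ =>
        Real.sqrt (∑ i, ((((1 : Matrix (Fin n) (Fin n) ℝ) - δ • L) ^ t).mulVec x₀ i
          - (∑ j, x₀ j) / n) ^ 2))
      atTop (nhds 0) := by
  obtain ⟨hs1, hs2⟩ := max_lt_iff.mp hs
  have hVV : (Matrix.of v) * (Matrix.of v)ᵀ = 1 := by
    ext i j
    rw [Matrix.mul_apply, Matrix.one_apply]
    exact honb i j
  have hVV' := mul_eq_one_comm.mp hVV
  have hexp : ∀ x : Fin n → ℝ, x = ∑ i, (v i ⬝ᵥ x) • v i := by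
    intro x
    have h : ((Matrix.of v)ᵀ * (Matrix.of v)) *ᵥ x = x := by rw [hVV', Matrix.one_mulVec]
    rw [← Matrix.mulVec_mulVec] at h
    ext k
    conv_lhs => rw [← h]
    simp only [Finset.sum_apply, Pi.smul_apply, smul_eq_mul]
    change ∑ i, v i k * (v i ⬝ᵥ x) = _
    exact Finset.sum_congr rfl fun i _ => mul_comm _ _
  have hpow : ∀ (t : ℕ) (i : Fin n),
      (((1 : Matrix (Fin n) (Fin n) ℝ) - δ • L) ^ t) *ᵥ v i = (1 - δ * lam i) ^ t • v i := by
    intro t i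
    induction t with
    | zero => simp
    | succ t ih =>
      rw [pow_succ, ← Matrix.mulVec_mulVec, Matrix.sub_mulVec, Matrix.one_mulVec,
        Matrix.smul_mulVec, heig i]
      have : v i - δ • lam i • v i = (1 - δ * lam i) • v i := by
        rw [sub_smul, one_smul, mul_smul]
      rw [this, Matrix.mulVec_smul, ih, smul_smul, pow_succ, mul_comm]
  have hsmall : ∀ i : Fin n, i ≠ ⟨0, by omega⟩ → |1 - δ * lam i| < 1 := by
    intro i hi
    have hi0 : i.val ≠ 0 := fun h => hi (Fin.ext h)
    have h1 : lam ⟨1, by omega⟩ ≤ lam i := hmono (by rw [Fin.le_def]; simp only; omega)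
    have h2 : lam i ≤ lam ⟨n - 1, by omega⟩ := hmono (by rw [Fin.le_def]; simp only; omega)
    rw [abs_lt] at hs1 hs2 ⊢
    rcases le_total 0 δ with hd | hd
    · have := mul_le_mul_of_nonneg_left h1 hd
      have := mul_le_mul_of_nonneg_left h2 hd
      constructor <;> linarith
    · have := mul_le_mul_of_nonpos_left h1 hd
      have := mul_le_mul_of_nonpos_left h2 hd
      constructor <;> linarith
  set o : Fin n := ⟨0, by omega⟩ with ho
  have horth : ∀ i : Fin n, i ≠ o → v i ⬝ᵥ (fun _ => (1 : ℝ)) = 0 := by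
    intro i hi
    have hne : lam i ≠ 0 := by
      intro h
      have := hsmall i hi
      rw [h] at this
      simp at this
    have h : (L *ᵥ v i) ⬝ᵥ (fun _ => (1 : ℝ)) = 0 := by
      rw [dotProduct_comm, Matrix.dotProduct_mulVec, ← Matrix.mulVec_transpose, hsym.eq, hL1,
        zero_dotProduct]
    rw [heig, smul_dotProduct, smul_eq_mul] at h
    exact (mul_eq_zero.mp h).resolve_left hne
  have hone : ∀ k, (v o ⬝ᵥ (fun _ => (1 : ℝ))) * v o k = 1 := by
    intro k
    have h := congrFun (hexp (fun _ => (1 : ℝ))) k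
    rw [Finset.sum_apply, Finset.sum_eq_single o] at h
    · exact h.symm
    · intro i _ hi
      rw [horth i hi]; simp
    · simp
  set a := v o ⬝ᵥ (fun _ => (1 : ℝ)) with ha
  have haa : a * a = n := by
    have : a * a = ∑ k, a * v o k := by
      rw [← Finset.mul_sum]
      congr 1
      simp [ha, dotProduct]
    rw [this]; simp [hone]
  have hsum : a * (v o ⬝ᵥ x₀) = ∑ j, x₀ j := by
    rw [dotProduct, Finset.mul_sum]
    refine Finset.sum_congr rfl fun j _ => ?_
    rw [← mul_assoc, hone, one_mul]
  have hn0 : (n : ℝ) ≠ 0 := by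
    have : n ≠ 0 := by omega
    exact_mod_cast this
  have hmean : ∀ k, (v o ⬝ᵥ x₀) * v o k = (∑ j, x₀ j) / n := by
    intro k
    rw [eq_div_iff hn0, ← haa, ← hsum]
    linear_combination (a * (v o ⬝ᵥ x₀)) * hone k
  have hlim : ∀ k, Tendsto (fun t : ℕ =>
      (((1 : Matrix (Fin n) (Fin n) ℝ) - δ • L) ^ t).mulVec x₀ k) atTop
      (nhds ((∑ j, x₀ j) / n)) := by
    intro k
    have hform : ∀ t : ℕ, (((1 : Matrix (Fin n) (Fin n) ℝ) - δ • L) ^ t).mulVec x₀ k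
        = ∑ i, (v i ⬝ᵥ x₀) * ((1 - δ * lam i) ^ t * v i k) := by
      intro t
      conv_lhs => rw [hexp x₀]
      rw [Matrix.mulVec_sum, Finset.sum_apply]
      refine Finset.sum_congr rfl fun i _ => ?_
      rw [Matrix.mulVec_smul, hpow]
      simp
    simp_rw [hform]
    have hl : (∑ j, x₀ j) / n = ∑ i, (if i = o then (v i ⬝ᵥ x₀) * v i k else 0) := by
      rw [Finset.sum_ite_eq' Finset.univ o]
      simp [hmean]
    rw [hl]
    refine tendsto_finsetSum _ fun i _ => ?_
    split_ifs with hi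
    · rw [hi, hlam1]
      simp
    · have h := tendsto_pow_atTop_nhds_zero_of_abs_lt_one (hsmall i hi)
      simpa using (h.mul_const (v i k)).const_mul (v i ⬝ᵥ x₀)
  have hfin : Tendsto (fun t : ℕ => ∑ i,
      ((((1 : Matrix (Fin n) (Fin n) ℝ) - δ • L) ^ t).mulVec x₀ i
          - (∑ j, x₀ j) / n) ^ 2) atTop (nhds (∑ _i : Fin n, (0 : ℝ))) := by
    refine tendsto_finsetSum _ fun i _ => ?_
    simpa using ((hlim i).sub_const ((∑ j, x₀ j) / n)).pow 2
  simpa using hfin.sqrt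
end

section
/- Let n ≥ 2, let L be an n×n real symmetric positive semidefinite matrix satisfying L·𝟏 = 0, with eigenvalues 0 = λ₁ ≤ λ₂ ≤ … ≤ λₙ, let δ ∈ ℝ, and set s = max{|1 − δλ₂|, |1 − δλₙ|}. Then for every x₀ ∈ ℝⁿ and every t ≥ 0, with μ = (1/n)·𝟏ᵀx₀, one has ‖(I − δL)ᵗ x₀ − μ𝟏‖ ≤ sᵗ ‖x₀ − μ𝟏‖ (Euclidean norm). -/
open Matrix

lemma aux_parseval {n : ℕ} (v : Fin n → (Fin n → ℝ))
    (honb : ∀ i j, v i ⬝ᵥ v j = if i = j then (1 : ℝ) else 0) (x y : Fin n → ℝ) :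
    x ⬝ᵥ y = ∑ i, (v i ⬝ᵥ x) * (v i ⬝ᵥ y) := by
  have h1 : (Matrix.of v) * (Matrix.of v)ᵀ = 1 := by
    ext i j
    rw [Matrix.one_apply, ← honb i j]
    rfl
  have h2 : (Matrix.of v)ᵀ * (Matrix.of v) = 1 := mul_eq_one_comm.mp h1
  have h3 : ((Matrix.of v) *ᵥ x) ⬝ᵥ ((Matrix.of v) *ᵥ y) = x ⬝ᵥ y := by
    rw [Matrix.dotProduct_mulVec, Matrix.vecMul_mulVec, h2, Matrix.vecMul_one]
  rw [← h3]
  rfl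

lemma aux_abs (δ a b c : ℝ) (h1 : a ≤ b) (h2 : b ≤ c) :
    |1 - δ * b| ≤ max |1 - δ * a| |1 - δ * c| := by
  rcases le_total 0 δ with h | h
  · rw [max_comm]
    exact abs_le_max_abs_abs (by nlinarith) (by nlinarith)
  · exact abs_le_max_abs_abs (by nlinarith) (by nlinarith)

/-- If `L` is a real symmetric positive semidefinite `n × n` matrix with `L 𝟏 = 0`
whose eigenvalues (with multiplicity, in increasing order) are
`0 = λ₁ ≤ λ₂ ≤ … ≤ λₙ`, witnessed by an orthonormal family of eigenvectors `v`,
and `s = max {|1 - δλ₂|, |1 - δλₙ|}`, then for every `x₀` and every `t ≥ 0`, with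
`μ = (𝟏ᵀ x₀) / n`, one has `‖(I - δL)^t x₀ - μ𝟏‖ ≤ s^t ‖x₀ - μ𝟏‖` (Euclidean norm). -/
theorem consensus_contraction_bound {n : ℕ} (hn : 2 ≤ n)
    (L : Matrix (Fin n) (Fin n) ℝ)
    (hsym : L.IsSymm) (hpsd : L.PosSemidef)
    (hL1 : L.mulVec (fun _ => (1 : ℝ)) = 0)
    (lam : Fin n → ℝ) (hmono : Monotone lam)
    (hlam1 : lam ⟨0, by omega⟩ = 0)
    (v : Fin n → (Fin n → ℝ))
    (honb : ∀ i j, v i ⬝ᵥ v j = if i = j then (1 : ℝ) else 0)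
    (heig : ∀ i, L.mulVec (v i) = lam i • v i)
    (δ : ℝ)
    (x₀ : Fin n → ℝ) (t : ℕ) :
    Real.sqrt (∑ i, ((((1 : Matrix (Fin n) (Fin n) ℝ) - δ • L) ^ t).mulVec x₀ i
        - (∑ j, x₀ j) / n) ^ 2)
      ≤ (max |1 - δ * lam ⟨1, by omega⟩| |1 - δ * lam ⟨n - 1, by omega⟩|) ^ t
        * Real.sqrt (∑ i, (x₀ i - (∑ j, x₀ j) / n) ^ 2) := by
  set s := max |1 - δ * lam ⟨1, by omega⟩| |1 - δ * lam ⟨n - 1, by omega⟩| with hs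
  set m := (∑ j, x₀ j) / n with hm
  set A := (1 : Matrix (Fin n) (Fin n) ℝ) - δ • L with hA
  have hn0 : (n : ℝ) ≠ 0 := by
    have : n ≠ 0 := by omega
    exact_mod_cast this
  have hs0 : 0 ≤ s := le_trans (abs_nonneg _) (le_max_left _ _)
  let e : Fin n → ℝ := fun _ => 1
  let y : Fin n → ℝ := x₀ - m • e
  have hLs : ∀ a b : Fin n → ℝ, a ⬝ᵥ (L *ᵥ b) = (L *ᵥ a) ⬝ᵥ b := by
    intro a b
    rw [Matrix.dotProduct_mulVec, ← Matrix.mulVec_transpose, hsym.eq]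
  have hAe : ∀ k : ℕ, (A ^ k) *ᵥ e = e := by
    intro k
    induction k with
    | zero => simp
    | succ k ih =>
      have : A *ᵥ e = e := by
        rw [hA, Matrix.sub_mulVec, Matrix.smul_mulVec, hL1]
        simp
      rw [pow_succ, ← Matrix.mulVec_mulVec, this, ih]
  have hAv : ∀ (k : ℕ) (i : Fin n) (w : Fin n → ℝ),
      v i ⬝ᵥ ((A ^ k) *ᵥ w) = (1 - δ * lam i) ^ k * (v i ⬝ᵥ w) := by
    intro k i
    induction k with
    | zero => simp
    | succ k ih =>
      intro w
      rw [pow_succ, ← Matrix.mulVec_mulVec, ih, hA, Matrix.sub_mulVec, Matrix.smul_mulVec,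
        Matrix.one_mulVec, dotProduct_sub, dotProduct_smul, hLs, heig, smul_dotProduct]
      simp only [smul_eq_mul]
      ring
  have hey : e ⬝ᵥ y = 0 := by
    simp only [e, y, dotProduct, Pi.sub_apply, Pi.smul_apply, smul_eq_mul, mul_one, one_mul,
      Finset.sum_sub_distrib, Finset.sum_const, Finset.card_univ, Fintype.card_fin, nsmul_eq_mul]
    rw [hm]
    field_simp
    ring
  have hee : e ⬝ᵥ e = n := by
    simp [e, dotProduct]
  have hkey : ∀ i, |1 - δ * lam i| ≤ s ∨ v i ⬝ᵥ y = 0 := by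
    intro i
    by_cases hi : i = ⟨0, by omega⟩
    · by_cases h1 : lam ⟨1, by omega⟩ = 0
      · left
        rw [hi, hlam1, ← h1]
        exact le_max_left _ _
      · right
        have hpos : 0 < lam ⟨1, by omega⟩ := by
          refine lt_of_le_of_ne ?_ (Ne.symm h1)
          rw [← hlam1]
          exact hmono (by simp [Fin.le_def])
        have hz : ∀ j, j ≠ i → v j ⬝ᵥ e = 0 := by
          intro j hj
          have hj1 : lam ⟨1, by omega⟩ ≤ lam j := by
            apply hmono
            rw [Fin.le_def]
            have : (j : ℕ) ≠ 0 := fun h => hj (by rw [hi]; exact Fin.ext h)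
            show 1 ≤ (j : ℕ)
            omega
          have h2 := hLs (v j) e
          rw [hL1, heig, smul_dotProduct, dotProduct_zero, smul_eq_mul] at h2
          rcases mul_eq_zero.mp h2.symm with h | h
          · linarith
          · exact h
        have p1 := aux_parseval v honb e y
        have p2 := aux_parseval v honb e e
        rw [Finset.sum_eq_single i (fun j _ hj => by rw [hz j hj, zero_mul]) (by simp)] at p1 p2
        rw [hey] at p1
        rw [hee] at p2
        rcases mul_eq_zero.mp p1.symm with h | h
        · rw [h, zero_mul] at p2
          exact absurd p2 hn0
        · exact h
    · left
      have : (i : ℕ) ≠ 0 := fun h => hi (Fin.ext h)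
      apply aux_abs
      · apply hmono
        rw [Fin.le_def]
        show 1 ≤ (i : ℕ)
        omega
      · apply hmono
        rw [Fin.le_def]
        show (i : ℕ) ≤ n - 1
        omega
  have e1 : ∑ i, (((A ^ t) *ᵥ x₀) i - m) ^ 2 = ((A ^ t) *ᵥ y) ⬝ᵥ ((A ^ t) *ᵥ y) := by
    have : (A ^ t) *ᵥ y = (A ^ t) *ᵥ x₀ - m • e := by
      simp only [y]
      rw [Matrix.mulVec_sub, Matrix.mulVec_smul, hAe]
    rw [this]
    simp [dotProduct, e, pow_two]
  have e2 : ∑ i, (x₀ i - m) ^ 2 = y ⬝ᵥ y := by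
    simp [dotProduct, y, e, pow_two]
  rw [e1, e2]
  have hmain : ((A ^ t) *ᵥ y) ⬝ᵥ ((A ^ t) *ᵥ y) ≤ (s ^ t) ^ 2 * (y ⬝ᵥ y) := by
    rw [aux_parseval v honb, aux_parseval v honb y y, Finset.mul_sum]
    apply Finset.sum_le_sum
    intro i _
    rw [hAv]
    rcases hkey i with h | h
    · have h3 : ((1 - δ * lam i) ^ t) ^ 2 ≤ (s ^ t) ^ 2 := by
        rw [← sq_abs, abs_pow]
        gcongr
      nlinarith [mul_le_mul_of_nonneg_right h3 (mul_self_nonneg (v i ⬝ᵥ y))]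
    · simp [h]
  calc _ ≤ √((s ^ t) ^ 2 * (y ⬝ᵥ y)) := Real.sqrt_le_sqrt hmain
    _ = _ := by
      rw [Real.sqrt_mul (sq_nonneg _), Real.sqrt_sq (pow_nonneg hs0 t)]
end

section
/- Let n ≥ 2, let L be an n×n real symmetric positive semidefinite matrix satisfying L·𝟏 = 0, with eigenvalues 0 = λ₁ ≤ λ₂ ≤ … ≤ λₙ, let δ ∈ ℝ, and set s = max{|1 − δλ₂|, |1 − δλₙ|}. Then for every x ∈ ℝⁿ, writing x' = (I − δL)x, one has x'ᵀ L x' ≤ s² · (xᵀ L x). -/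
open Matrix

/-- Convexity of `t ↦ |1 - t|` on an interval. -/
theorem abs_one_sub_le_max (a b t : ℝ) (h1 : a ≤ t) (h2 : t ≤ b) :
    |1 - t| ≤ max |1 - a| |1 - b| := by
  rw [max_comm]
  exact abs_le_max_abs_abs (by linarith) (by linarith)

/-- If `L` is a real symmetric positive semidefinite `n × n` matrix with `L 𝟏 = 0`
whose eigenvalues (with multiplicity, in increasing order) are
`0 = λ₁ ≤ λ₂ ≤ … ≤ λₙ`, witnessed by an orthonormal family of eigenvectors `v`,
and `s = max {|1 - δλ₂|, |1 - δλₙ|}`, then for every `x`, writing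
`x' = (I - δL) x`, one has `x'ᵀ L x' ≤ s² · (xᵀ L x)`. -/
theorem disagreement_one_step_bound {n : ℕ} (hn : 2 ≤ n)
    (L : Matrix (Fin n) (Fin n) ℝ)
    (hsym : L.IsSymm) (hpsd : L.PosSemidef)
    (hL1 : L.mulVec (fun _ => (1 : ℝ)) = 0)
    (lam : Fin n → ℝ) (hmono : Monotone lam)
    (hlam1 : lam ⟨0, by omega⟩ = 0)
    (v : Fin n → (Fin n → ℝ))
    (honb : ∀ i j, v i ⬝ᵥ v j = if i = j then (1 : ℝ) else 0)
    (heig : ∀ i, L.mulVec (v i) = lam i • v i)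
    (δ : ℝ) (x : Fin n → ℝ) :
    (((1 : Matrix (Fin n) (Fin n) ℝ) - δ • L).mulVec x) ⬝ᵥ
        L.mulVec (((1 : Matrix (Fin n) (Fin n) ℝ) - δ • L).mulVec x)
      ≤ (max |1 - δ * lam ⟨1, by omega⟩| |1 - δ * lam ⟨n - 1, by omega⟩|) ^ 2
        * (x ⬝ᵥ L.mulVec x) := by
  have hV : (Matrix.of v) * (Matrix.of v)ᵀ = 1 := by
    ext i j
    rw [Matrix.one_apply, ← honb i j]
    rfl
  have hV' : (Matrix.of v)ᵀ * (Matrix.of v) = 1 := mul_eq_one_comm.mp hV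
  have pars : ∀ a b : Fin n → ℝ, a ⬝ᵥ b = ∑ i, (v i ⬝ᵥ a) * (v i ⬝ᵥ b) := by
    intro a b
    have h : (Matrix.of v).mulVec a ⬝ᵥ (Matrix.of v).mulVec b = a ⬝ᵥ b := by
      rw [Matrix.dotProduct_mulVec, ← Matrix.mulVec_transpose, Matrix.mulVec_mulVec, hV',
        Matrix.one_mulVec]
    rw [← h]
    rfl
  have hvL : ∀ i (y : Fin n → ℝ), v i ⬝ᵥ L.mulVec y = lam i * (v i ⬝ᵥ y) := by
    intro i y
    rw [Matrix.dotProduct_mulVec, ← Matrix.mulVec_transpose, hsym.eq, heig, smul_dotProduct,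
      smul_eq_mul]
  have hvx : ∀ i, v i ⬝ᵥ (((1 : Matrix (Fin n) (Fin n) ℝ) - δ • L).mulVec x)
      = (1 - δ * lam i) * (v i ⬝ᵥ x) := by
    intro i
    rw [Matrix.sub_mulVec, Matrix.one_mulVec, Matrix.smul_mulVec, dotProduct_sub,
      dotProduct_smul, hvL, smul_eq_mul]
    ring
  rw [pars, pars x, Finset.mul_sum]
  refine Finset.sum_le_sum fun i _ => ?_
  rw [hvL, hvL, hvx]
  by_cases hi : i.val = 0
  · have h0 : lam i = 0 := by
      rw [← hlam1]
      congr 1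
      exact Fin.ext hi
    simp [h0]
  · have hnn : 0 ≤ lam i := by
      rw [← hlam1]
      exact hmono (Fin.mk_le_of_le_val (Nat.zero_le _))
    have h1 : lam ⟨1, by omega⟩ ≤ lam i := hmono (by rw [Fin.le_def]; simp only; omega)
    have h2 : lam i ≤ lam ⟨n - 1, by omega⟩ := hmono (by rw [Fin.le_def]; simp only; omega)
    have hs : |1 - δ * lam i| ≤
        max |1 - δ * lam ⟨1, by omega⟩| |1 - δ * lam ⟨n - 1, by omega⟩| := by
      rcases le_total 0 δ with hd | hd
      · exact abs_one_sub_le_max (δ * lam ⟨1, by omega⟩) _ _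
          (mul_le_mul_of_nonneg_left h1 hd) (mul_le_mul_of_nonneg_left h2 hd)
      · rw [max_comm]
        exact abs_one_sub_le_max _ _ _
          (mul_le_mul_of_nonpos_left h2 hd) (mul_le_mul_of_nonpos_left h1 hd)
    have hsq : (1 - δ * lam i) ^ 2 ≤
        (max |1 - δ * lam ⟨1, by omega⟩| |1 - δ * lam ⟨n - 1, by omega⟩|) ^ 2 := by
      rw [← sq_abs (1 - δ * lam i)]
      exact pow_le_pow_left₀ (abs_nonneg _) hs 2
    calc _ = (1 - δ * lam i) ^ 2 * (lam i * (v i ⬝ᵥ x) ^ 2) := by ring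
      _ ≤ _ * (lam i * (v i ⬝ᵥ x) ^ 2) :=
        mul_le_mul_of_nonneg_right hsq (by positivity)
      _ = _ := by ring
end

section
/- Let n ≥ 2, let L be an n×n real symmetric positive semidefinite matrix satisfying L·𝟏 = 0, with eigenvalues 0 = λ₁ ≤ λ₂ ≤ … ≤ λₙ, let δ ∈ ℝ, and set s = max{|1 − δλ₂|, |1 − δλₙ|}. Then for every x₀ ∈ ℝⁿ and every t ≥ 0, the iterate x(t) = (I − δL)ᵗ x₀ satisfies x(t)ᵀ L x(t) ≤ s²ᵗ · (x₀ᵀ L x₀). -/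
open Matrix

/-- If `L` is a real symmetric positive semidefinite `n × n` matrix with `L 𝟏 = 0`
whose eigenvalues (with multiplicity, in increasing order) are
`0 = λ₁ ≤ λ₂ ≤ … ≤ λₙ`, witnessed by an orthonormal family of eigenvectors `v`,
and `s = max {|1 - δλ₂|, |1 - δλₙ|}`, then for every `x₀` and every `t ≥ 0`, the
iterate `x(t) = (I - δL)^t x₀` satisfies `x(t)ᵀ L x(t) ≤ s^(2t) · (x₀ᵀ L x₀)`. -/
theorem disagreement_iterate_bound {n : ℕ} (hn : 2 ≤ n)
    (L : Matrix (Fin n) (Fin n) ℝ)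
    (hsym : L.IsSymm) (hpsd : L.PosSemidef)
    (hL1 : L.mulVec (fun _ => (1 : ℝ)) = 0)
    (lam : Fin n → ℝ) (hmono : Monotone lam)
    (hlam1 : lam ⟨0, by omega⟩ = 0)
    (v : Fin n → (Fin n → ℝ))
    (honb : ∀ i j, v i ⬝ᵥ v j = if i = j then (1 : ℝ) else 0)
    (heig : ∀ i, L.mulVec (v i) = lam i • v i)
    (δ : ℝ) (x₀ : Fin n → ℝ) (t : ℕ) :
    ((((1 : Matrix (Fin n) (Fin n) ℝ) - δ • L) ^ t).mulVec x₀) ⬝ᵥ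
        L.mulVec ((((1 : Matrix (Fin n) (Fin n) ℝ) - δ • L) ^ t).mulVec x₀)
      ≤ (max |1 - δ * lam ⟨1, by omega⟩| |1 - δ * lam ⟨n - 1, by omega⟩|) ^ (2 * t)
        * (x₀ ⬝ᵥ L.mulVec x₀) := by
  have hV : (Matrix.of v) * (Matrix.of v)ᵀ = 1 := by
    ext i j
    rw [Matrix.mul_apply, Matrix.one_apply, ← honb i j]
    rfl
  have hV' : (Matrix.of v)ᵀ * (Matrix.of v) = 1 := mul_eq_one_comm.mp hV
  have pars : ∀ x y : Fin n → ℝ, x ⬝ᵥ y = ∑ i, (v i ⬝ᵥ x) * (v i ⬝ᵥ y) := by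
    intro x y
    have h : (Matrix.of v *ᵥ x) ⬝ᵥ (Matrix.of v *ᵥ y) = x ⬝ᵥ y := by
      rw [Matrix.dotProduct_mulVec, ← Matrix.mulVec_transpose, Matrix.mulVec_mulVec, hV',
        Matrix.one_mulVec]
    rw [← h]
    rfl
  have hLi : ∀ i (x : Fin n → ℝ), v i ⬝ᵥ L.mulVec x = lam i * (v i ⬝ᵥ x) := by
    intro i x
    rw [Matrix.dotProduct_mulVec, ← Matrix.mulVec_transpose, hsym.eq, heig, smul_dotProduct,
      smul_eq_mul]
  have hpow : ∀ i (k : ℕ), v i ⬝ᵥ (((1 : Matrix (Fin n) (Fin n) ℝ) - δ • L) ^ k).mulVec x₀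
      = (1 - δ * lam i) ^ k * (v i ⬝ᵥ x₀) := by
    intro i k
    induction k with
    | zero => simp
    | succ k ih =>
      rw [pow_succ', ← Matrix.mulVec_mulVec, Matrix.sub_mulVec, Matrix.one_mulVec,
        Matrix.smul_mulVec, dotProduct_sub, dotProduct_smul, hLi, ih, smul_eq_mul]
      ring
  rw [pars _ (L.mulVec _), pars x₀ (L.mulVec x₀), Finset.mul_sum]
  apply Finset.sum_le_sum
  intro i _
  rw [hLi, hLi, hpow]
  by_cases hi : i.val = 0
  · have : i = ⟨0, by omega⟩ := Fin.ext hi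
    rw [this, hlam1]
    simp
  have h0 : 0 ≤ lam i := by
    rw [← hlam1]
    exact hmono (Fin.mk_le_of_le_val (Nat.zero_le _))
  have h1 : lam ⟨1, by omega⟩ ≤ lam i := hmono (by rw [Fin.le_def]; show 1 ≤ i.val; omega)
  have h2 : lam i ≤ lam ⟨n - 1, by omega⟩ :=
    hmono (by rw [Fin.le_def]; show i.val ≤ n - 1; omega)
  generalize lam ⟨1, by omega⟩ = a at *
  generalize lam ⟨n - 1, by omega⟩ = b at *
  have hs : |1 - δ * lam i| ≤ max |1 - δ * a| |1 - δ * b| := by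
    have p1 := le_max_left |1 - δ * a| |1 - δ * b|
    have p2 := le_max_right |1 - δ * a| |1 - δ * b|
    rw [abs_le] at p1 p2 ⊢
    rcases le_total 0 δ with hd | hd
    · have := mul_le_mul_of_nonneg_left h1 hd
      have := mul_le_mul_of_nonneg_left h2 hd
      constructor <;> linarith
    · have := mul_le_mul_of_nonpos_left h1 hd
      have := mul_le_mul_of_nonpos_left h2 hd
      constructor <;> linarith
  have hp := pow_le_pow_left₀ (abs_nonneg _) hs (2 * t)
  have he : |1 - δ * lam i| ^ (2 * t) = (1 - δ * lam i) ^ (2 * t) := by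
    rw [pow_mul, sq_abs, ← pow_mul]
  rw [he] at hp
  have := mul_le_mul_of_nonneg_right hp (mul_nonneg h0 (sq_nonneg (v i ⬝ᵥ x₀)))
  calc _ = (1 - δ * lam i) ^ (2 * t) * (lam i * (v i ⬝ᵥ x₀) ^ 2) := by ring
    _ ≤ _ := this
    _ = _ := by ring
end

section
/- Let n ≥ 2, let L be an n×n real symmetric positive semidefinite matrix satisfying L·𝟏 = 0, with eigenvalues 0 = λ₁ ≤ λ₂ ≤ … ≤ λₙ, and let δ ∈ ℝ be such that s = max{|1 − δλ₂|, |1 − δλₙ|} < 1. Then for every x ∈ ℝⁿ with xᵀ L x > 0, writing x' = (I − δL)x, one has x'ᵀ L x' < xᵀ L x; that is, the disagreement functional strictly decreases at each update step as long as it is nonzero. -/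
open Matrix

/-- If `L` is a real symmetric positive semidefinite `n × n` matrix with `L 𝟏 = 0`
whose eigenvalues (with multiplicity, in increasing order) are
`0 = λ₁ ≤ λ₂ ≤ … ≤ λₙ`, witnessed by an orthonormal family of eigenvectors `v`,
and `δ` is such that `s = max {|1 - δλ₂|, |1 - δλₙ|} < 1`, then for every `x` with
`xᵀ L x > 0`, writing `x' = (I - δL) x`, one has `x'ᵀ L x' < xᵀ L x`: the
disagreement functional strictly decreases at each update step while nonzero. -/
theorem disagreement_strict_decrease {n : ℕ} (hn : 2 ≤ n)
    (L : Matrix (Fin n) (Fin n) ℝ)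
    (hsym : L.IsSymm) (hpsd : L.PosSemidef)
    (hL1 : L.mulVec (fun _ => (1 : ℝ)) = 0)
    (lam : Fin n → ℝ) (hmono : Monotone lam)
    (hlam1 : lam ⟨0, by omega⟩ = 0)
    (v : Fin n → (Fin n → ℝ))
    (honb : ∀ i j, v i ⬝ᵥ v j = if i = j then (1 : ℝ) else 0)
    (heig : ∀ i, L.mulVec (v i) = lam i • v i)
    (δ : ℝ)
    (hs : max |1 - δ * lam ⟨1, by omega⟩| |1 - δ * lam ⟨n - 1, by omega⟩| < 1)
    (x : Fin n → ℝ) (hx : 0 < x ⬝ᵥ L.mulVec x) :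
    (((1 : Matrix (Fin n) (Fin n) ℝ) - δ • L).mulVec x) ⬝ᵥ
        L.mulVec (((1 : Matrix (Fin n) (Fin n) ℝ) - δ • L).mulVec x)
      < x ⬝ᵥ L.mulVec x := by
  set V : Matrix (Fin n) (Fin n) ℝ := Matrix.of v with hV
  have hVV : V * Vᵀ = 1 := by
    ext i j
    rw [Matrix.mul_apply, Matrix.one_apply, ← honb i j]
    rfl
  have hVV' : Vᵀ * V = 1 := mul_eq_one_comm.mp hVV
  have hLV : L * Vᵀ = Vᵀ * Matrix.diagonal lam := by
    ext i j
    rw [Matrix.mul_diagonal]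
    have h := congrFun (heig j) i
    simp only [Pi.smul_apply, smul_eq_mul] at h
    rw [Matrix.transpose_apply, hV, Matrix.of_apply, mul_comm, ← h]
    rfl
  have hL : L = Vᵀ * Matrix.diagonal lam * V := by
    rw [← hLV, Matrix.mul_assoc, hVV', Matrix.mul_one]
  have hVL : V * L = Matrix.diagonal lam * V := by
    rw [hL, ← Matrix.mul_assoc, ← Matrix.mul_assoc, hVV, Matrix.one_mul]
  have hQ : ∀ y : Fin n → ℝ, y ⬝ᵥ L.mulVec y = ∑ i, lam i * (V.mulVec y i) ^ 2 := by
    intro y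
    have h1 : L.mulVec y = Vᵀ.mulVec ((Matrix.diagonal lam).mulVec (V.mulVec y)) := by
      rw [Matrix.mulVec_mulVec, Matrix.mulVec_mulVec, ← hL]
    rw [h1, Matrix.dotProduct_mulVec, Matrix.vecMul_transpose]
    simp only [dotProduct, Matrix.mulVec_diagonal]
    exact Finset.sum_congr rfl fun i _ => by ring
  have hc : ∀ i, V.mulVec (((1 : Matrix (Fin n) (Fin n) ℝ) - δ • L).mulVec x) i
      = (1 - δ * lam i) * V.mulVec x i := by
    intro i
    rw [Matrix.sub_mulVec, Matrix.one_mulVec, Matrix.smul_mulVec, Matrix.mulVec_sub,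
      Matrix.mulVec_smul, Matrix.mulVec_mulVec, hVL, ← Matrix.mulVec_mulVec]
    simp only [Pi.sub_apply, Pi.smul_apply, smul_eq_mul, Matrix.mulVec_diagonal]
    ring
  have hnn : ∀ i, 0 ≤ lam i := fun i => by
    rw [← hlam1]; exact hmono (Fin.mk_le_of_le_val (Nat.zero_le _))
  obtain ⟨h2, hN⟩ := max_lt_iff.mp hs
  rw [abs_lt] at h2 hN
  have hlt : ∀ i, 0 < lam i → (1 - δ * lam i) ^ 2 < 1 := by
    intro i hi
    have hi0 : 1 ≤ i.val := by
      by_contra hcon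
      have : i = ⟨0, by omega⟩ := Fin.ext (by simp; omega)
      rw [this, hlam1] at hi
      exact lt_irrefl _ hi
    have hiN : lam i ≤ lam ⟨n - 1, by omega⟩ := hmono (Fin.le_def.mpr (by simp; omega))
    have hδ : 0 < δ := by
      by_contra hcon
      nlinarith [hnn ⟨1, by omega⟩]
    rw [sq_lt_one_iff_abs_lt_one, abs_lt]
    constructor <;> nlinarith
  rw [hQ] at hx
  rw [hQ, hQ]
  have hle : ∀ i, lam i * ((1 - δ * lam i) * V.mulVec x i) ^ 2 ≤ lam i * (V.mulVec x i) ^ 2 := by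
    intro i
    rcases (hnn i).eq_or_lt with h | h
    · simp [← h]
    · rw [mul_pow]
      exact mul_le_mul_of_nonneg_left
        (mul_le_of_le_one_left (sq_nonneg _) (hlt i h).le) h.le
  obtain ⟨i, hi, hpos⟩ := Finset.exists_lt_of_sum_lt
    (s := Finset.univ) (f := fun _ : Fin n => (0 : ℝ))
    (g := fun i => lam i * (V.mulVec x i) ^ 2) (by simpa using hx)
  simp only [hc]
  refine Finset.sum_lt_sum (fun i _ => hle i) ⟨i, hi, ?_⟩
  have hl : 0 < lam i := by
    rcases (hnn i).eq_or_lt with h | h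
    · simp [← h] at hpos
    · exact h
  have h3 := hlt i hl
  calc lam i * ((1 - δ * lam i) * V.mulVec x i) ^ 2
      = (1 - δ * lam i) ^ 2 * (lam i * (V.mulVec x i) ^ 2) := by ring
    _ < lam i * (V.mulVec x i) ^ 2 := mul_lt_of_lt_one_left hpos h3
end
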